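/- Let the block matrix A (of size n = n₁ + n₂) have entries a on the diagonal block positions of the first group, −b on entries from the first group to the second, −c from the second to the first, and d within the second group, where a,b,c,d > 0 and each row's absolute values sum to 1 (a·n₁ + b·n₂ = 1 and c·n₁ + d·n₂ = 1). For n₁ = 1, the characteristic polynomial of A is χ(λ) = (−λ)^(n−2)·(λ − 1)·(λ − q), where q = a − 1 + (n−1)d. -/

import Mathlib

open Polynomial

/-! The matrix is constant on blocks, so it factors as `U * V` through a space with one dimension
per block. Up to a power of `X` its characteristic polynomial is therefore that of `V * U`, the
`2 × 2` matrix obtained by summing the entries of a row over each column block. The condition on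
absolute row sums says that the sign vector `(1, -1)` is an eigenvector of `V * U` with the common
row sum as eigenvalue, and the trace then gives the other eigenvalue. -/

section BlockConstant

open Matrix

variable {R ι κ : Type*} [CommRing R] [Fintype ι] [Fintype κ] [DecidableEq κ]

theorem submatrix_id_mul_one_submatrix {S μ : Type*} [NonAssocSemiring S] (M : Matrix μ κ S)
    (f : ι → κ) :
    M.submatrix id f * (1 : Matrix κ κ S).submatrix f id =
      M * diagonal fun k ↦ (Fintype.card {i // f i = k} : S) := by
  ext k l
  calc (M.submatrix id f * (1 : Matrix κ κ S).submatrix f id) k l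
      = ∑ i, if f i = l then M k l else 0 := by
        simp only [mul_apply, submatrix_apply, id_eq, one_apply, mul_ite, mul_one, mul_zero]
        exact Finset.sum_congr rfl fun i _ ↦ by split_ifs with h <;> simp [h]
    _ = (M * diagonal fun k ↦ (Fintype.card {i // f i = k} : S)) k l := by
        rw [mul_diagonal, Fintype.card_subtype, ← Finset.sum_filter, Finset.sum_const,
          nsmul_eq_mul, Nat.cast_comm]

theorem charpoly_submatrix_self [DecidableEq ι] (M : Matrix κ κ R) (f : ι → κ)
    (hcard : Fintype.card κ ≤ Fintype.card ι) :
    (M.submatrix f f).charpoly = X ^ (Fintype.card ι - Fintype.card κ) *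
      (M * diagonal fun k ↦ (Fintype.card {i // f i = k} : R)).charpoly := by
  have hfactor : M.submatrix f f = (1 : Matrix κ κ R).submatrix f id * M.submatrix id f := by
    rw [← submatrix_mul _ _ _ _ _ Function.bijective_id, one_mul]
  rw [hfactor, charpoly_mul_comm_of_le _ _ hcard, submatrix_id_mul_one_submatrix]

theorem charpoly_fin_two_of_add_eq {x y z w r : R} (hxy : x + y = r) (hzw : z + w = r) :
    !![x, -y; -z, w].charpoly = (X - C r) * (X - C (x + w - r)) := by
  nontriviality R
  have hdet : x * w - -y * -z = r * (x + w - r) := by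
    linear_combination (-z) * hxy + (x - r) * hzw
  rw [charpoly_fin_two, trace_fin_two_of, det_fin_two_of, hdet]
  simp only [map_add, map_sub, map_mul]
  ring

end BlockConstant

theorem stmt_13_general {R ι : Type*} [CommRing R] [Fintype ι] [DecidableEq ι]
    (p : ι → Prop) [DecidablePred p] {n₁ n₂ : ℕ} (hn₁ : Fintype.card {i // p i} = n₁)
    (hn₂ : Fintype.card {i // ¬p i} = n₂) (hcard : 2 ≤ Fintype.card ι) {a b c d r q : R}
    (hrow₁ : n₁ * a + n₂ * b = r) (hrow₂ : n₁ * c + n₂ * d = r) (hq : q = n₁ * a + n₂ * d - r)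
    {A : Matrix ι ι R}
    (hA : ∀ i j, A i j = if p i then (if p j then a else -b) else (if p j then -c else d)) :
    A.charpoly = X ^ (Fintype.card ι - 2) * (X - C r) * (X - C q) := by
  let block (i : ι) : Fin 2 := if p i then 0 else 1
  have hblocks : A = !![a, -b; -c, d].submatrix block block := by
    ext i j
    by_cases hi : p i <;> by_cases hj : p j <;> simp [hA, block, hi, hj]
  have hquotient :
      (!![a, -b; -c, d] * Matrix.diagonal fun k ↦ (Fintype.card {i // block i = k} : R)) =
        !![n₁ * a, -(n₂ * b); -(n₁ * c), n₂ * d] := by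
    rw [← hn₁, ← hn₂]
    ext k l
    fin_cases k <;> fin_cases l <;> simp [block, Fintype.card_subtype, mul_comm]
  rw [hblocks, charpoly_submatrix_self _ _ (by simpa using hcard), hquotient,
    charpoly_fin_two_of_add_eq hrow₁ hrow₂, ← hq, Fintype.card_fin, mul_assoc]

theorem stmt_13 (n₂ : ℕ) (hn₂ : 1 ≤ n₂) (n : ℕ) (hn : n = 1 + n₂)
    (a b c d : ℝ) (ha : 0 < a) (hb : 0 < b) (hc : 0 < c) (hd : 0 < d)
    (hrow1 : a + n₂ * b = 1) (hrow2 : c + n₂ * d = 1)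
    (A : Matrix (Fin n) (Fin n) ℝ)
    (hA : ∀ i j : Fin n, A i j =
      if i = (⟨0, by omega⟩ : Fin n) then
        (if j = (⟨0, by omega⟩ : Fin n) then a else -b)
      else
        (if j = (⟨0, by omega⟩ : Fin n) then -c else d))
    (q : ℝ) (hq : q = a - 1 + (n - 1 : ℝ) * d) :
    Matrix.charpoly A = X ^ (n - 2) * (X - 1) * (X - C q) := by
  simpa using stmt_13_general (fun i : Fin n ↦ i = ⟨0, by omega⟩) (n₁ := 1) (n₂ := n₂) (r := 1)
    (by simp) (by simp [hn]) (by rw [Fintype.card_fin]; omega) (by simpa using hrow1)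
    (by simpa using hrow2) (by rw [hq, hn]; push_cast; ring) hA
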